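/- In the multi-agent Gaussian estimation problem, a linear strategy of the form ẑ_i = L_i x̂_0 + F_i ỹ_i minimizes the expected team estimation error J over all measurable square-integrable strategies if and only if the gains satisfy Σ_{j=1}^n ( S_ij F_j Σ̂_ji − S_ij L_j Θ̂_i ) Σ̂_ii⁻¹ = 0 for all i ∈ {1,…,n}, equivalently Σ_{j=1}^n ( S_ij F_j Σ̂_ji − S_ij L_j Θ̂_i ) = 0 for all i. -/

import Mathlib

open MeasureTheory ProbabilityTheory Matrix

/-!
The team cost is a convex quadratic functional of the strategy, and any square-integrable
perturbation measurable with respect to the agents' information is allowed. A strategy is therefore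
optimal iff the first variation vanishes in all these directions, that is, iff for every agent `i`
the weighted error `∑ⱼ Sᵢⱼ rⱼ`, where `rⱼ = Lⱼ x - ẑⱼ`, has conditional expectation zero given
`(y₀, yᵢ)` (Radner). For a linear strategy the weighted error lies in the Gaussian space of the
problem, where vanishing of this conditional expectation means being uncorrelated with `y₀` and
`yᵢ`. Now `rⱼ = Lⱼ x̃ - Fⱼ ỹⱼ` is uncorrelated with `y₀` whatever the gains are, so that only the
correlation with `ỹᵢ` remains, and it is the negative of `∑ⱼ (Sᵢⱼ Fⱼ Σ̂ⱼᵢ - Sᵢⱼ Lⱼ Θ̂ᵢ)`.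
-/

section CondExp

variable {Ω : Type*} {m m₀ : MeasurableSpace Ω} {μ : Measure Ω} {u w : Ω → ℝ}

lemma ae_eq_zero_of_integral_mul_self_eq_zero (hu2 : MemLp u 2 μ)
    (h : ∫ ω, u ω * u ω ∂μ = 0) : u =ᵐ[μ] 0 := by
  have hsq := (integral_eq_zero_iff_of_nonneg (fun ω => mul_self_nonneg (u ω))
    (hu2.integrable_mul hu2)).1 h
  filter_upwards [hsq] with ω hω using mul_self_eq_zero.1 hω

lemma inner_toLp_toLp (hu : MemLp u 2 μ) (hw : MemLp w 2 μ) :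
    inner ℝ (hu.toLp u) (hw.toLp w) = ∫ ω, u ω * w ω ∂μ := by
  rw [L2.inner_def]
  refine integral_congr_ae ?_
  filter_upwards [hu.coeFn_toLp, hw.coeFn_toLp] with ω h₁ h₂
  simp [h₁, h₂, mul_comm]

lemma exists_forall_integral_sub_dotProduct_mul_eq_zero {κ : Type*} [Fintype κ] {Y : Ω → κ → ℝ}
    (hu : MemLp u 2 μ) (hY : MemLp Y 2 μ) :
    ∃ c : κ → ℝ, ∀ k, ∫ ω, (u ω - c ⬝ᵥ Y ω) * Y ω k ∂μ = 0 := by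
  let V := Submodule.span ℝ (Set.range fun k => (hY.eval k).toLp (Y · k))
  have : FiniteDimensional ℝ V := .span_of_finite ℝ (Set.finite_range _)
  obtain ⟨c, hc⟩ := (Submodule.mem_span_range_iff_exists_fun ℝ).1
    (V.starProjection_apply_mem (hu.toLp u))
  refine ⟨c, fun k => ?_⟩
  have hterm (j : κ) : MemLp (fun ω => c j * Y ω j) 2 μ := (hY.eval j).const_mul (c j)
  have hsum : MemLp (fun ω => c ⬝ᵥ Y ω) 2 μ := memLp_finsetSum _ fun j _ => hterm j
  have hproj : hsum.toLp = V.starProjection (hu.toLp u) := by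
    rw [← hc]
    ext1
    have hcoe : ∀ᵐ ω ∂μ, ∀ j, (c j • (hY.eval j).toLp (Y · j)) ω = c j * Y ω j :=
      ae_all_iff.2 fun j => by
        rw [← MemLp.toLp_const_smul]
        exact ((hY.eval j).const_smul (c j)).coeFn_toLp
    filter_upwards [hsum.coeFn_toLp, hcoe,
      Lp.coeFn_fun_finsetSum Finset.univ fun j => c j • (hY.eval j).toLp (Y · j)] with ω h₁ h₂ h₃
    rw [h₁, h₃]
    simp only [h₂, dotProduct]
  refine (inner_toLp_toLp (hu.sub hsum) (hY.eval k)).symm.trans ?_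
  rw [MemLp.toLp_sub hu hsum, hproj]
  exact V.starProjection_inner_eq_zero _ _ (Submodule.subset_span ⟨k, rfl⟩)

variable [IsFiniteMeasure μ]

lemma integral_condExp_mul (hm : m ≤ m₀) (hw : StronglyMeasurable[m] w)
    (hu2 : MemLp u 2 μ) (hw2 : MemLp w 2 μ) :
    ∫ ω, (μ[u | m]) ω * w ω ∂μ = ∫ ω, u ω * w ω ∂μ := by
  have hpull : μ[u * w | m] =ᵐ[μ] μ[u | m] * w :=
    condExp_mul_of_stronglyMeasurable_right hw (hu2.integrable_mul hw2)
      (hu2.integrable one_le_two)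
  exact (integral_congr_ae hpull).symm.trans (integral_condExp hm)

lemma integral_mul_eq_zero_of_condExp_eq_zero (hm : m ≤ m₀) (hw : StronglyMeasurable[m] w)
    (hu2 : MemLp u 2 μ) (hw2 : MemLp w 2 μ) (h : μ[u | m] =ᵐ[μ] 0) :
    ∫ ω, u ω * w ω ∂μ = 0 := by
  rw [← integral_condExp_mul hm hw hu2 hw2]
  refine integral_eq_zero_of_ae ?_
  filter_upwards [h] with ω hω
  simp only [hω, Pi.zero_apply, zero_mul]

end CondExp

section CrossMoment

variable {Ω ι κ l n : Type*} [MeasurableSpace Ω] {μ : Measure Ω}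

/-- The matrix `E[X Yᵀ]`, which for centered vectors is the cross-covariance `Cov(X, Y)`. -/
noncomputable def crossMoment (μ : Measure Ω) (X : Ω → κ → ℝ) (Y : Ω → l → ℝ) : Matrix κ l ℝ :=
  of fun k k' => ∫ ω, X ω k * Y ω k' ∂μ

lemma crossMoment_transpose (X : Ω → κ → ℝ) (Y : Ω → l → ℝ) :
    (crossMoment μ X Y)ᵀ = crossMoment μ Y X := by
  ext a b
  simp only [crossMoment, transpose_apply, of_apply, mul_comm]

variable [Fintype κ] [Fintype l]

lemma measurable_mulVec (M : Matrix n κ ℝ) : Measurable fun v : κ → ℝ => M *ᵥ v :=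
  measurable_pi_lambda _ fun _ => (by fun_prop : Continuous fun v : κ → ℝ => _ ⬝ᵥ v).measurable

lemma memLp_mulVec {X : Ω → κ → ℝ} {p : ENNReal} [Fintype n] (M : Matrix n κ ℝ)
    (hX : MemLp X p μ) : MemLp (fun ω => M *ᵥ X ω) p μ :=
  (LinearMap.toContinuousLinearMap M.mulVecLin).comp_memLp' hX

variable {X : Ω → κ → ℝ} {Y : Ω → l → ℝ}

lemma integrable_mul_eval (hX : MemLp X 2 μ) (hY : MemLp Y 2 μ) (k : κ) (k' : l) :
    Integrable (fun ω => X ω k * Y ω k') μ :=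
  (hX.eval k).integrable_mul (hY.eval k')

lemma crossMoment_mulVec_left (M : Matrix n κ ℝ) (hX : MemLp X 2 μ) (hY : MemLp Y 2 μ) :
    crossMoment μ (fun ω => M *ᵥ X ω) Y = M * crossMoment μ X Y := by
  ext a b
  simp only [crossMoment, of_apply, mul_apply, mulVec, dotProduct, Finset.sum_mul, mul_assoc]
  rw [integral_finsetSum _ fun k _ => (integrable_mul_eval hX hY k b).const_mul (M a k)]
  simp only [integral_const_mul]

lemma crossMoment_sub_left {X' : Ω → κ → ℝ} (hX : MemLp X 2 μ) (hX' : MemLp X' 2 μ)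
    (hY : MemLp Y 2 μ) :
    crossMoment μ (fun ω => X ω - X' ω) Y = crossMoment μ X Y - crossMoment μ X' Y := by
  ext a b
  simp only [crossMoment, of_apply, Pi.sub_apply, sub_mul, Matrix.sub_apply]
  exact integral_sub (integrable_mul_eval hX hY a b) (integrable_mul_eval hX' hY a b)

lemma crossMoment_sum_left {s : Finset ι} {Z : ι → Ω → κ → ℝ} (hZ : ∀ i ∈ s, MemLp (Z i) 2 μ)
    (hY : MemLp Y 2 μ) :
    crossMoment μ (fun ω => ∑ i ∈ s, Z i ω) Y = ∑ i ∈ s, crossMoment μ (Z i) Y := by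
  ext a b
  simp only [crossMoment, of_apply, Finset.sum_apply, Finset.sum_mul, Matrix.sum_apply]
  exact integral_finsetSum _ fun i hi => integrable_mul_eval (hZ i hi) hY a b

lemma crossMoment_sub_right {Y' : Ω → l → ℝ} (hX : MemLp X 2 μ) (hY : MemLp Y 2 μ)
    (hY' : MemLp Y' 2 μ) :
    crossMoment μ X (fun ω => Y ω - Y' ω) = crossMoment μ X Y - crossMoment μ X Y' := by
  rw [← crossMoment_transpose, crossMoment_sub_left hY hY' hX, transpose_sub,
    crossMoment_transpose, crossMoment_transpose]

end CrossMoment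

section Estimate

variable {Ω κ l : Type*} {m m₀ : MeasurableSpace Ω} {μ : Measure Ω} {X : Ω → κ → ℝ}
  {W : Ω → l → ℝ}

/-- The least-squares estimate `X̂` of a random vector `X` given the information `m`: the vector
of conditional expectations of its coordinates. -/
noncomputable def estimate (μ : Measure Ω) (m : MeasurableSpace Ω) (X : Ω → κ → ℝ) : Ω → κ → ℝ :=
  fun ω k => (μ[(X · k) | m]) ω

/-- The innovation `X̃ = X - X̂`: the part of `X` that is not predicted by the information `m`. -/
noncomputable def innovation (μ : Measure Ω) (m : MeasurableSpace Ω) (X : Ω → κ → ℝ) :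
    Ω → κ → ℝ :=
  fun ω => X ω - estimate μ m X ω

lemma measurable_estimate : Measurable[m] (estimate μ m X) :=
  @measurable_pi_lambda _ _ _ m _ _ fun _ => stronglyMeasurable_condExp.measurable

lemma measurable_estimate_comap_prodMk {q : Type*} {Y0 : Ω → q → ℝ} :
    Measurable[.comap (fun ω => (Y0 ω, W ω)) inferInstance]
      (estimate μ (.comap Y0 inferInstance) X) :=
  measurable_estimate.mono
    (measurable_fst.comp (comap_measurable fun ω => (Y0 ω, W ω))).comap_le le_rfl

lemma measurable_innovation_comap_prodMk {q : Type*} {Y0 : Ω → q → ℝ} :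
    Measurable[.comap (fun ω => (Y0 ω, W ω)) inferInstance]
      (innovation μ (.comap Y0 inferInstance) W) :=
  (measurable_snd.comp (comap_measurable fun ω => (Y0 ω, W ω))).sub
    measurable_estimate_comap_prodMk

variable [Fintype κ]

lemma memLp_estimate (hX : MemLp X 2 μ) : MemLp (estimate μ m X) 2 μ :=
  .of_eval fun k => (hX.eval k).condExp one_le_two

lemma memLp_innovation (hX : MemLp X 2 μ) : MemLp (innovation μ m X) 2 μ :=
  hX.sub (memLp_estimate hX)

variable [IsFiniteMeasure μ]

lemma condExp_innovation_eq_zero (hm : m ≤ m₀) (hX : MemLp X 2 μ) (k : κ) :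
    μ[(innovation μ m X · k) | m] =ᵐ[μ] 0 := by
  have hsub := condExp_sub ((hX.eval k).integrable one_le_two)
    (integrable_condExp (f := (X · k)) (m := m)) m
  rw [condExp_of_stronglyMeasurable hm stronglyMeasurable_condExp integrable_condExp,
    sub_self] at hsub
  exact hsub

variable [Fintype l]

lemma crossMoment_eq_zero_of_condExp_eq_zero (hm : m ≤ m₀) (hX : MemLp X 2 μ) (hW : MemLp W 2 μ)
    (hWm : Measurable[m] W) (h : ∀ k, μ[(X · k) | m] =ᵐ[μ] 0) : crossMoment μ X W = 0 := by
  ext k k'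
  exact integral_mul_eq_zero_of_condExp_eq_zero hm
    ((measurable_pi_apply k').comp hWm).stronglyMeasurable (hX.eval k) (hW.eval k') (h k)

lemma crossMoment_innovation_eq_zero (hm : m ≤ m₀) (hX : MemLp X 2 μ) (hW : MemLp W 2 μ)
    (hWm : Measurable[m] W) : crossMoment μ (innovation μ m X) W = 0 :=
  crossMoment_eq_zero_of_condExp_eq_zero hm (memLp_innovation hX) hW hWm
    (condExp_innovation_eq_zero hm hX)

lemma crossMoment_innovation_innovation (hm : m ≤ m₀) (hX : MemLp X 2 μ) (hW : MemLp W 2 μ) :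
    crossMoment μ (innovation μ m X) (innovation μ m W) = crossMoment μ X (innovation μ m W) := by
  have horth : crossMoment μ (estimate μ m X) (innovation μ m W) = 0 := by
    rw [← crossMoment_transpose, crossMoment_innovation_eq_zero hm hW (memLp_estimate hX)
      measurable_estimate, transpose_zero]
  exact (crossMoment_sub_left hX (memLp_estimate hX) (memLp_innovation hW)).trans
    (by rw [horth, sub_zero])

end Estimate

section Team

variable {Ω ι : Type*} {κ : ι → Type*} [Fintype ι] [∀ i, Fintype (κ i)]

/-- The matrix with rows and columns indexed by pairs (block, position) whose blocks are `S i j`. -/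
def ofBlocks (S : ∀ i j, Matrix (κ i) (κ j) ℝ) : Matrix (Σ i, κ i) (Σ i, κ i) ℝ :=
  of fun a b => S a.1 b.1 a.2 b.2

/-- The block bilinear form `∑ᵢⱼ vᵢᵀ Sᵢⱼ wⱼ`. -/
def blockForm (S : ∀ i j, Matrix (κ i) (κ j) ℝ) (v w : ∀ i, κ i → ℝ) : ℝ :=
  ∑ i, ∑ j, v i ⬝ᵥ S i j *ᵥ w j

variable {S : ∀ i j, Matrix (κ i) (κ j) ℝ}

lemma blockForm_eq_dotProduct_mulVec (v w : ∀ i, κ i → ℝ) :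
    blockForm S v w = Sigma.uncurry v ⬝ᵥ ofBlocks S *ᵥ Sigma.uncurry w := by
  simp only [blockForm, dotProduct, mulVec, Fintype.sum_sigma, ofBlocks, of_apply,
    Sigma.uncurry, Finset.mul_sum]
  exact Finset.sum_congr rfl fun i _ => Finset.sum_comm

lemma blockForm_comm (hS : (ofBlocks S).IsHermitian) (v w : ∀ i, κ i → ℝ) :
    blockForm S v w = blockForm S w v := by
  rw [blockForm_eq_dotProduct_mulVec, blockForm_eq_dotProduct_mulVec, dotProduct_mulVec,
    ← mulVec_transpose, dotProduct_comm, ← conjTranspose_eq_transpose_of_trivial, hS.eq]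

lemma blockForm_self_nonneg (hS : (ofBlocks S).PosSemidef) (v : ∀ i, κ i → ℝ) :
    0 ≤ blockForm S v v := by
  rw [blockForm_eq_dotProduct_mulVec]
  exact hS.dotProduct_mulVec_nonneg _

lemma blockForm_smul_left (t : ℝ) (v w : ∀ i, κ i → ℝ) :
    blockForm S (t • v) w = t * blockForm S v w := by
  simp only [blockForm, Pi.smul_apply, smul_dotProduct, smul_eq_mul, Finset.mul_sum]

lemma blockForm_smul_right (t : ℝ) (v w : ∀ i, κ i → ℝ) :
    blockForm S v (t • w) = t * blockForm S v w := by
  simp only [blockForm, Pi.smul_apply, mulVec_smul, dotProduct_smul, smul_eq_mul, Finset.mul_sum]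

lemma blockForm_sub_sub (hS : (ofBlocks S).IsHermitian) (v w : ∀ i, κ i → ℝ) :
    blockForm S (v - w) (v - w) = blockForm S v v - 2 * blockForm S w v + blockForm S w w := by
  have hexpand : blockForm S (v - w) (v - w)
      = blockForm S v v - blockForm S v w - (blockForm S w v - blockForm S w w) := by
    simp only [blockForm, Pi.sub_apply, mulVec_sub, dotProduct_sub, sub_dotProduct,
      Finset.sum_sub_distrib]
    ring
  rw [hexpand, blockForm_comm hS v w]
  ring

lemma blockForm_eq_sum_mul (v w : ∀ i, κ i → ℝ) :
    blockForm S v w = ∑ i, ∑ k, (∑ j, S i j *ᵥ w j) k * v i k := by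
  simp only [blockForm, ← dotProduct_sum]
  exact Finset.sum_congr rfl fun i _ => dotProduct_comm _ _

variable [m₀ : MeasurableSpace Ω] {μ : Measure Ω}

/-- The expected quadratic cost `E[∑ᵢⱼ rᵢᵀ Sᵢⱼ rⱼ]` of the error vectors `rᵢ` of a team. -/
noncomputable def teamCost (μ : Measure Ω) (S : ∀ i j, Matrix (κ i) (κ j) ℝ)
    (r : ∀ i, Ω → κ i → ℝ) : ℝ :=
  ∫ ω, blockForm S (r · ω) (r · ω) ∂μ

/-- The weighted error `∑ⱼ Sᵢⱼ rⱼ` of agent `i`: half of the gradient of the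
team cost with respect to `rᵢ`. -/
def weightedError (S : ∀ i j, Matrix (κ i) (κ j) ℝ) (r : ∀ i, Ω → κ i → ℝ) (i : ι) :
    Ω → κ i → ℝ :=
  fun ω => ∑ j, S i j *ᵥ r j ω

/-- Team optimality in the sense of Radner: `z` has the least cost for estimating the targets `ξ`
among all square-integrable strategies in which agent `i` knows only `𝓜 i`. That `z` is itself
such a strategy is not part of the definition. -/
def IsTeamOptimal (μ : Measure Ω) (S : ∀ i j, Matrix (κ i) (κ j) ℝ) (𝓜 : ι → MeasurableSpace Ω)
    (ξ z : ∀ i, Ω → κ i → ℝ) : Prop :=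
  ∀ z' : ∀ i, Ω → κ i → ℝ, (∀ i, Measurable[𝓜 i] (z' i)) → (∀ i, MemLp (z' i) 2 μ) →
    teamCost μ S (ξ - z) ≤ teamCost μ S (ξ - z')

lemma memLp_weightedError {r : ∀ i, Ω → κ i → ℝ} {p : ENNReal} (hr : ∀ i, MemLp (r i) p μ)
    (i : ι) : MemLp (weightedError S r i) p μ :=
  memLp_finsetSum _ fun j _ => memLp_mulVec (S i j) (hr j)

lemma crossMoment_weightedError {p : Type*} [Fintype p] {r : ∀ i, Ω → κ i → ℝ} {W : Ω → p → ℝ}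
    (hr : ∀ i, MemLp (r i) 2 μ) (hW : MemLp W 2 μ) (i : ι) :
    crossMoment μ (weightedError S r i) W = ∑ j, S i j * crossMoment μ (r j) W := by
  refine (crossMoment_sum_left (fun j _ => memLp_mulVec (S i j) (hr j)) hW).trans ?_
  exact Finset.sum_congr rfl fun j _ => crossMoment_mulVec_left (S i j) (hr j) hW

variable {r d ξ z : ∀ i, Ω → κ i → ℝ} {𝓜 : ι → MeasurableSpace Ω}

lemma isTeamOptimal_comap_iff {E : ι → Type*} [∀ i, MeasurableSpace (E i)] {Y : ∀ i, Ω → E i} :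
    IsTeamOptimal μ S (fun i => .comap (Y i) inferInstance) ξ z ↔
      ∀ g : ∀ i, E i → κ i → ℝ, (∀ i, Measurable (g i)) →
        (∀ i, MemLp (fun ω => g i (Y i ω)) 2 μ) →
        teamCost μ S (ξ - z) ≤ teamCost μ S (ξ - fun i ω => g i (Y i ω)) := by
  refine ⟨fun hopt g hg hg2 => hopt _ (fun i => (hg i).comp (comap_measurable (Y i))) hg2,
    fun h z' hz' hz2 => ?_⟩
  choose g hg hgz using fun i => (hz' i).exists_eq_measurable_comp
  obtain rfl : z' = fun i ω => g i (Y i ω) := funext hgz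
  exact h g hg hz2

lemma integrable_blockForm (hd : ∀ i, MemLp (d i) 2 μ) (hr : ∀ i, MemLp (r i) 2 μ) :
    Integrable (fun ω => blockForm S (d · ω) (r · ω)) μ := by
  simp only [blockForm_eq_sum_mul]
  exact integrable_finsetSum _ fun i _ => integrable_finsetSum _ fun k _ =>
    ((memLp_weightedError hr i).eval k).integrable_mul ((hd i).eval k)

lemma integral_blockForm (hd : ∀ i, MemLp (d i) 2 μ) (hr : ∀ i, MemLp (r i) 2 μ) :
    ∫ ω, blockForm S (d · ω) (r · ω) ∂μ = ∑ i, ∑ k, ∫ ω, weightedError S r i ω k * d i ω k ∂μ := by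
  have hint (i : ι) (k : κ i) : Integrable (fun ω => weightedError S r i ω k * d i ω k) μ :=
    ((memLp_weightedError hr i).eval k).integrable_mul ((hd i).eval k)
  simp only [blockForm_eq_sum_mul]
  refine (integral_finsetSum _ fun i _ => integrable_finsetSum _ fun k _ => hint i k).trans ?_
  exact Finset.sum_congr rfl fun i _ => integral_finsetSum _ fun k _ => hint i k

lemma teamCost_nonneg (hS : (ofBlocks S).PosSemidef) (r : ∀ i, Ω → κ i → ℝ) :
    0 ≤ teamCost μ S r :=
  integral_nonneg fun _ => blockForm_self_nonneg hS _

lemma teamCost_smul (t : ℝ) (r : ∀ i, Ω → κ i → ℝ) :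
    teamCost μ S (t • r) = t ^ 2 * teamCost μ S r := by
  rw [teamCost, teamCost, ← integral_const_mul]
  refine integral_congr_ae (.of_forall fun ω => ?_)
  change blockForm S (t • (r · ω)) (t • (r · ω)) = _
  rw [blockForm_smul_left, blockForm_smul_right]
  ring

lemma teamCost_sub (hS : (ofBlocks S).IsHermitian) (hr : ∀ i, MemLp (r i) 2 μ)
    (hd : ∀ i, MemLp (d i) 2 μ) :
    teamCost μ S (r - d)
      = teamCost μ S r - 2 * ∫ ω, blockForm S (d · ω) (r · ω) ∂μ + teamCost μ S d := by
  have hrr := integrable_blockForm (S := S) hr hr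
  have hdr := (integrable_blockForm (S := S) hd hr).const_mul 2
  have hdd := integrable_blockForm (S := S) hd hd
  calc teamCost μ S (r - d)
      = ∫ ω, (blockForm S (r · ω) (r · ω) - 2 * blockForm S (d · ω) (r · ω)
          + blockForm S (d · ω) (d · ω)) ∂μ :=
        integral_congr_ae (.of_forall fun ω => blockForm_sub_sub hS (r · ω) (d · ω))
    _ = _ := by
        have hsub : Integrable (fun ω => blockForm S (r · ω) (r · ω)
          - 2 * blockForm S (d · ω) (r · ω)) μ := hrr.sub hdr
        rw [integral_add hsub hdd, integral_sub hrr hdr, integral_const_mul, teamCost, teamCost]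

lemma integral_blockForm_eq_zero_of_forall_teamCost_le (hS : (ofBlocks S).IsHermitian)
    (hr : ∀ i, MemLp (r i) 2 μ) (hd : ∀ i, MemLp (d i) 2 μ)
    (hmin : ∀ t : ℝ, teamCost μ S r ≤ teamCost μ S (r - t • d)) :
    ∫ ω, blockForm S (d · ω) (r · ω) ∂μ = 0 := by
  set b := ∫ ω, blockForm S (d · ω) (r · ω) ∂μ with hb
  have hquad (t : ℝ) : 0 ≤ teamCost μ S d * (t * t) + (-2 * b) * t + 0 := by
    have hcross : ∫ ω, blockForm S ((t • d) · ω) (r · ω) ∂μ = t * b := by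
      rw [hb, ← integral_const_mul]
      exact integral_congr_ae (.of_forall fun ω => blockForm_smul_left t (d · ω) (r · ω))
    have h := hmin t
    rw [teamCost_sub (d := t • d) hS hr fun i => (hd i).const_smul t, teamCost_smul, hcross] at h
    linarith
  have hdiscrim : (-2 * b) ^ 2 - 4 * teamCost μ S d * 0 ≤ 0 := discrim_le_zero hquad
  nlinarith [sq_nonneg b]

variable [IsFiniteMeasure μ]

lemma IsTeamOptimal.condExp_weightedError_eq_zero (hopt : IsTeamOptimal μ S 𝓜 ξ z)
    (hS : (ofBlocks S).PosSemidef) (h𝓜 : ∀ i, 𝓜 i ≤ m₀) (hξ : ∀ i, MemLp (ξ i) 2 μ)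
    (hz : ∀ i, MemLp (z i) 2 μ) (hzm : ∀ i, Measurable[𝓜 i] (z i)) (i : ι) (k : κ i) :
    μ[(weightedError S (ξ - z) i · k) | 𝓜 i] =ᵐ[μ] 0 := by
  have hr (i : ι) : MemLp ((ξ - z) i) 2 μ := (hξ i).sub (hz i)
  have he (i : ι) : MemLp (weightedError S (ξ - z) i) 2 μ := memLp_weightedError hr i
  let d : ∀ i, Ω → κ i → ℝ := fun i => estimate μ (𝓜 i) (weightedError S (ξ - z) i)
  have hd (i : ι) : MemLp (d i) 2 μ := memLp_estimate (he i)
  have hcross : ∫ ω, blockForm S (d · ω) ((ξ - z) · ω) ∂μ = 0 := by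
    refine integral_blockForm_eq_zero_of_forall_teamCost_le hS.isHermitian hr hd fun t => ?_
    rw [sub_sub]
    exact hopt (z + t • d) (fun i => (hzm i).add (measurable_estimate.const_smul t))
      fun i => (hz i).add ((hd i).const_smul t)
  have hsum : ∑ i, ∑ k, ∫ ω, d i ω k * d i ω k ∂μ = 0 := by
    rw [← hcross, integral_blockForm hd hr]
    exact Finset.sum_congr rfl fun i _ => Finset.sum_congr rfl fun k _ =>
      integral_condExp_mul (h𝓜 i) stronglyMeasurable_condExp ((he i).eval k) ((hd i).eval k)
  have hnonneg (i : ι) (k : κ i) : 0 ≤ ∫ ω, d i ω k * d i ω k ∂μ :=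
    integral_nonneg fun ω => mul_self_nonneg _
  have hi := (Fintype.sum_eq_zero_iff_of_nonneg fun i =>
    Finset.sum_nonneg fun k _ => hnonneg i k).1 hsum
  have hik := (Fintype.sum_eq_zero_iff_of_nonneg (hnonneg i)).1 (congrFun hi i)
  exact ae_eq_zero_of_integral_mul_self_eq_zero ((hd i).eval k) (congrFun hik k)

lemma isTeamOptimal_of_condExp_weightedError_eq_zero
    (h : ∀ i k, μ[(weightedError S (ξ - z) i · k) | 𝓜 i] =ᵐ[μ] 0)
    (hS : (ofBlocks S).PosSemidef) (h𝓜 : ∀ i, 𝓜 i ≤ m₀) (hξ : ∀ i, MemLp (ξ i) 2 μ)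
    (hz : ∀ i, MemLp (z i) 2 μ) (hzm : ∀ i, Measurable[𝓜 i] (z i)) :
    IsTeamOptimal μ S 𝓜 ξ z := by
  intro z' hzm' hz'
  have hr (i : ι) : MemLp ((ξ - z) i) 2 μ := (hξ i).sub (hz i)
  have hd (i : ι) : MemLp ((z' - z) i) 2 μ := (hz' i).sub (hz i)
  have hdm (i : ι) : Measurable[𝓜 i] ((z' - z) i) := (hzm' i).sub (hzm i)
  have hcross : ∫ ω, blockForm S ((z' - z) · ω) ((ξ - z) · ω) ∂μ = 0 := by
    rw [integral_blockForm hd hr]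
    exact Finset.sum_eq_zero fun i _ => Finset.sum_eq_zero fun k _ =>
      integral_mul_eq_zero_of_condExp_eq_zero (h𝓜 i)
        ((measurable_pi_apply k).comp (hdm i)).stronglyMeasurable
        ((memLp_weightedError hr i).eval k) ((hd i).eval k) (h i k)
  calc teamCost μ S (ξ - z) ≤ teamCost μ S (ξ - z) + teamCost μ S (z' - z) :=
        le_add_of_nonneg_right (teamCost_nonneg hS _)
    _ = teamCost μ S ((ξ - z) - (z' - z)) := by
        rw [teamCost_sub hS.isHermitian hr hd, hcross, mul_zero, sub_zero]
    _ = teamCost μ S (ξ - z') := by rw [sub_sub_sub_cancel_right]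

theorem isTeamOptimal_iff_condExp_weightedError_eq_zero (hS : (ofBlocks S).PosSemidef)
    (h𝓜 : ∀ i, 𝓜 i ≤ m₀) (hξ : ∀ i, MemLp (ξ i) 2 μ) (hz : ∀ i, MemLp (z i) 2 μ)
    (hzm : ∀ i, Measurable[𝓜 i] (z i)) :
    IsTeamOptimal μ S 𝓜 ξ z ↔
      ∀ i k, μ[(weightedError S (ξ - z) i · k) | 𝓜 i] =ᵐ[μ] 0 :=
  ⟨fun hopt => hopt.condExp_weightedError_eq_zero hS h𝓜 hξ hz hzm,
    fun h => isTeamOptimal_of_condExp_weightedError_eq_zero h hS h𝓜 hξ hz hzm⟩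

end Team

section GaussianSpace

variable {Ω κ l T : Type*} {m₀ : MeasurableSpace Ω} {μ : Measure Ω}

/-- A linear space of centered Gaussian random variables. It consists of functions rather than of
elements of `L²`, and is required to be saturated under almost everywhere equality. -/
structure IsGaussianSpace (μ : Measure Ω) (G : Submodule ℝ (Ω → ℝ)) : Prop where
  hasGaussianLaw : ∀ u ∈ G, HasGaussianLaw u μ
  integral_eq_zero : ∀ u ∈ G, ∫ ω, u ω ∂μ = 0
  mem_of_ae_eq : ∀ u ∈ G, ∀ v, v =ᵐ[μ] u → v ∈ G

/-- The space of random variables almost everywhere equal to a linear combination of the `Z t`. -/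
def aeSpan (μ : Measure Ω) (Z : T → Ω → ℝ) : Submodule ℝ (Ω → ℝ) where
  carrier := {u | ∃ w ∈ Submodule.span ℝ (Set.range Z), u =ᵐ[μ] w}
  zero_mem' := ⟨0, zero_mem _, .rfl⟩
  add_mem' := fun ⟨w, hw, hu⟩ ⟨w', hw', hu'⟩ => ⟨w + w', add_mem hw hw', hu.add hu'⟩
  smul_mem' := fun c _ ⟨w, hw, hu⟩ => ⟨c • w, Submodule.smul_mem _ c hw, hu.const_smul c⟩

lemma mem_aeSpan (Z : T → Ω → ℝ) (t : T) : Z t ∈ aeSpan μ Z :=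
  ⟨Z t, Submodule.subset_span ⟨t, rfl⟩, .rfl⟩

lemma isGaussianSpace_aeSpan [Fintype T] {Z : T → Ω → ℝ}
    (hZ : ∀ c : T → ℝ, ∃ v, μ.map (fun ω => ∑ t, c t * Z t ω) = gaussianReal 0 v) :
    IsGaussianSpace μ (aeSpan μ Z) := by
  have hspan (w : Ω → ℝ) (hw : w ∈ Submodule.span ℝ (Set.range Z)) :
      HasGaussianLaw w μ ∧ ∫ ω, w ω ∂μ = 0 := by
    obtain ⟨c, rfl⟩ := (Submodule.mem_span_range_iff_exists_fun ℝ).1 hw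
    obtain ⟨v, hv⟩ := hZ c
    have hsum : ∑ t, c t • Z t = fun ω => ∑ t, c t * Z t ω := by
      ext ω
      simp only [Finset.sum_apply, Pi.smul_apply, smul_eq_mul]
    rw [← hsum] at hv
    have hlaw : HasGaussianLaw (∑ t, c t • Z t) μ := ⟨hv ▸ inferInstance⟩
    refine ⟨hlaw, ?_⟩
    rw [← integral_map (f := fun a => a) hlaw.aemeasurable aestronglyMeasurable_id, hv,
      integral_id_gaussianReal]
  exact
    { hasGaussianLaw := fun u ⟨w, hw, hu⟩ => (hspan w hw).1.congr hu.symm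
      integral_eq_zero := fun u ⟨w, hw, hu⟩ => (integral_congr_ae hu).trans (hspan w hw).2
      mem_of_ae_eq := fun u ⟨w, hw, hu⟩ v hv => ⟨w, hw, hv.trans hu⟩ }

lemma exists_isGaussianSpace {ι q : Type*} {r : ι → Type*} [Fintype ι] [Fintype κ] [Fintype q]
    [∀ i, Fintype (r i)] {x : Ω → κ → ℝ} {y0 : Ω → q → ℝ} {y : ∀ i, Ω → r i → ℝ}
    (hGauss : ∀ (a : κ → ℝ) (b0 : q → ℝ) (b : ∀ i, r i → ℝ), ∃ v : NNReal,
      μ.map (fun ω => (∑ k, a k * x ω k) + (∑ k, b0 k * y0 ω k) + ∑ i, ∑ k, b i k * y i ω k)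
        = gaussianReal 0 v) :
    ∃ G, IsGaussianSpace μ G ∧
      (∀ k, (x · k) ∈ G) ∧ (∀ k, (y0 · k) ∈ G) ∧ ∀ i k, (y i · k) ∈ G := by
  let Z : κ ⊕ q ⊕ (Σ i, r i) → Ω → ℝ :=
    Sum.elim (fun k ω => x ω k) (Sum.elim (fun k ω => y0 ω k) fun p ω => y p.1 ω p.2)
  refine ⟨aeSpan μ Z, isGaussianSpace_aeSpan fun c => ?_, fun k => mem_aeSpan Z (.inl k),
    fun k => mem_aeSpan Z (.inr (.inl k)), fun i k => mem_aeSpan Z (.inr (.inr ⟨i, k⟩))⟩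
  simpa only [Fintype.sum_sum_type, Fintype.sum_sigma, Z, Sum.elim_inl, Sum.elim_inr, add_assoc]
    using hGauss (fun k => c (.inl k)) (fun k => c (.inr (.inl k)))
      fun i k => c (.inr (.inr ⟨i, k⟩))

lemma dotProduct_mem_submodule [Fintype κ] {G : Submodule ℝ (Ω → ℝ)} {Y : Ω → κ → ℝ} (c : κ → ℝ)
    (hY : ∀ k, (Y · k) ∈ G) : (fun ω => c ⬝ᵥ Y ω) ∈ G := by
  have hsum : (fun ω => c ⬝ᵥ Y ω) = ∑ k, c k • (Y · k) := by
    ext ω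
    simp only [dotProduct, Finset.sum_apply, Pi.smul_apply, smul_eq_mul]
  rw [hsum]
  exact sum_mem fun k _ => G.smul_mem _ (hY k)

namespace IsGaussianSpace

variable {G : Submodule ℝ (Ω → ℝ)} {X : Ω → l → ℝ} {Y : Ω → κ → ℝ} {u : Ω → ℝ}

lemma memLp (hG : IsGaussianSpace μ G) (hu : u ∈ G) : MemLp u 2 μ :=
  (hG.hasGaussianLaw u hu).memLp_two

lemma isGaussianProcess (hG : IsGaussianSpace μ G) {Z : T → Ω → ℝ} (hZ : ∀ t, Z t ∈ G) :
    IsGaussianProcess Z μ where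
  hasGaussianLaw I := by
    classical
    have hmeas : AEMeasurable (fun ω => I.restrict (Z · ω)) μ :=
      aemeasurable_pi_iff.2 fun t => (hG.hasGaussianLaw _ (hZ t)).aemeasurable
    refine ⟨isGaussian_of_map_eq_gaussianReal fun ℓ => ?_⟩
    have hmem : ∑ t : I, ℓ (fun s => if t = s then 1 else 0) • Z t ∈ G :=
      sum_mem fun t _ => G.smul_mem _ (hZ t)
    have hcomb : ℓ ∘ (fun ω => I.restrict (Z · ω))
        = ∑ t : I, ℓ (fun s => if t = s then 1 else 0) • Z t := by
      ext ω
      simp only [Finset.sum_apply, Pi.smul_apply, smul_eq_mul]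
      exact (ℓ.toLinearMap.pi_apply_eq_sum_univ _).trans
        (Finset.sum_congr rfl fun t _ => mul_comm _ _)
    rw [AEMeasurable.map_map_of_aemeasurable ℓ.continuous.aemeasurable hmeas, hcomb]
    exact ⟨_, _, (hG.hasGaussianLaw _ hmem).map_eq_gaussianReal⟩

variable [IsProbabilityMeasure μ]

lemma indepFun (hG : IsGaussianSpace μ G) (hu : u ∈ G) (hY : ∀ k, (Y · k) ∈ G)
    (horth : ∀ k, ∫ ω, u ω * Y ω k ∂μ = 0) : IndepFun u Y μ := by
  have hprocess : IsGaussianProcess (Sum.elim (fun _ : Unit => u) fun k => (Y · k)) μ :=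
    hG.isGaussianProcess (Sum.forall.2 ⟨fun _ => hu, hY⟩)
  have hcov (k : κ) : cov[u, (Y · k); μ] = 0 := by
    rw [covariance_eq_sub (hG.memLp hu) (hG.memLp (hY k)), hG.integral_eq_zero u hu, zero_mul,
      sub_zero]
    exact horth k
  have hindep := hprocess.indepFun_of_covariance_eq_zero
    (fun _ => (hG.hasGaussianLaw u hu).aemeasurable)
    (fun k => (hG.hasGaussianLaw _ (hY k)).aemeasurable) fun _ k => hcov k
  exact hindep.comp (measurable_pi_apply ()) measurable_id

lemma condExp_comap_eq_zero (hG : IsGaussianSpace μ G) (hYm : Measurable Y) (hu : u ∈ G)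
    (hY : ∀ k, (Y · k) ∈ G) (horth : ∀ k, ∫ ω, u ω * Y ω k ∂μ = 0) :
    μ[u | MeasurableSpace.comap Y inferInstance] =ᵐ[μ] 0 := by
  have hum : AEMeasurable u μ := (hG.hasGaussianLaw u hu).aemeasurable
  have hindep : IndepFun (hum.mk u) Y μ := (hG.indepFun hu hY horth).congr hum.ae_eq_mk .rfl
  have hcond := condExp_indep_eq hum.measurable_mk.comap_le hYm.comap_le
    (comap_measurable _).stronglyMeasurable hindep
  rw [← integral_congr_ae hum.ae_eq_mk, hG.integral_eq_zero u hu] at hcond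
  exact (condExp_congr_ae hum.ae_eq_mk).trans hcond

lemma condExp_comap_mem [Finite κ] (hG : IsGaussianSpace μ G) (hYm : Measurable Y) (hu : u ∈ G)
    (hY : ∀ k, (Y · k) ∈ G) : μ[u | MeasurableSpace.comap Y inferInstance] ∈ G := by
  have := Fintype.ofFinite κ
  obtain ⟨c, hc⟩ := exists_forall_integral_sub_dotProduct_mul_eq_zero (hG.memLp hu)
    (.of_eval fun k => hG.memLp (hY k))
  have hproj : (fun ω => c ⬝ᵥ Y ω) ∈ G := dotProduct_mem_submodule c hY
  have hprojm : StronglyMeasurable[MeasurableSpace.comap Y inferInstance] fun ω => c ⬝ᵥ Y ω :=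
    ((by fun_prop : Measurable fun y : κ → ℝ => c ⬝ᵥ y).comp
      (comap_measurable Y)).stronglyMeasurable
  have hproj_int : Integrable (fun ω => c ⬝ᵥ Y ω) μ := (hG.memLp hproj).integrable one_le_two
  have hresidual := hG.condExp_comap_eq_zero hYm (G.sub_mem hu hproj) hY hc
  have hsub := condExp_sub ((hG.memLp hu).integrable one_le_two) hproj_int
    (MeasurableSpace.comap Y inferInstance)
  rw [condExp_of_stronglyMeasurable hYm.comap_le hprojm hproj_int] at hsub
  refine hG.mem_of_ae_eq _ hproj _ ?_
  filter_upwards [hsub.symm.trans hresidual] with ω hω using sub_eq_zero.1 hω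

lemma innovation_mem [Finite κ] (hG : IsGaussianSpace μ G) (hYm : Measurable Y)
    (hY : ∀ k, (Y · k) ∈ G) (hX : ∀ k, (X · k) ∈ G) (k : l) :
    (innovation μ (.comap Y inferInstance) X · k) ∈ G :=
  G.sub_mem (hX k) (hG.condExp_comap_mem hYm (hX k) hY)

lemma condExp_comap_prodMk_eq_zero (hG : IsGaussianSpace μ G) (hXm : Measurable X)
    (hYm : Measurable Y) (hu : u ∈ G) (hX : ∀ k, (X · k) ∈ G) (hY : ∀ k, (Y · k) ∈ G)
    (hXorth : ∀ k, ∫ ω, u ω * X ω k ∂μ = 0) (hYorth : ∀ k, ∫ ω, u ω * Y ω k ∂μ = 0) :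
    μ[u | MeasurableSpace.comap (fun ω => (X ω, Y ω)) inferInstance] =ᵐ[μ] 0 := by
  have hcomap : MeasurableSpace.comap (fun ω => (X ω, Y ω)) inferInstance
      = MeasurableSpace.comap (fun ω => Sum.elim (X ω) (Y ω)) inferInstance := by
    rw [← (MeasurableEquiv.sumPiEquivProdPi fun _ : l ⊕ κ => ℝ).measurableEmbedding.comap_eq,
      MeasurableSpace.comap_comp]
    rfl
  have hm : Measurable fun ω => Sum.elim (X ω) (Y ω) :=
    measurable_pi_iff.2 (Sum.forall.2 ⟨measurable_pi_iff.1 hXm, measurable_pi_iff.1 hYm⟩)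
  rw [hcomap]
  exact hG.condExp_comap_eq_zero hm hu (Sum.forall.2 ⟨hX, hY⟩) (Sum.forall.2 ⟨hXorth, hYorth⟩)

theorem condExp_comap_prodMk_eq_zero_iff_crossMoment_innovation {n : Type*} [Finite n] [Finite κ]
    {E : Ω → n → ℝ} (hG : IsGaussianSpace μ G)
    (hXm : Measurable X) (hYm : Measurable Y) (hE : ∀ k, (E · k) ∈ G) (hX : ∀ k, (X · k) ∈ G)
    (hY : ∀ k, (Y · k) ∈ G) (horth : crossMoment μ E X = 0) :
    (∀ k, μ[(E · k) | MeasurableSpace.comap (fun ω => (X ω, Y ω)) inferInstance] =ᵐ[μ] 0) ↔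
      crossMoment μ E (innovation μ (.comap X inferInstance) Y) = 0 := by
  have := Fintype.ofFinite n
  have := Fintype.ofFinite κ
  have hE2 : MemLp E 2 μ := .of_eval fun k => hG.memLp (hE k)
  have hY2 : MemLp Y 2 μ := .of_eval fun k => hG.memLp (hY k)
  constructor
  · exact crossMoment_eq_zero_of_condExp_eq_zero (hXm.prodMk hYm).comap_le hE2
      (memLp_innovation hY2) measurable_innovation_comap_prodMk
  · intro hinnov k
    have hEX (k' : l) : ∫ ω, E ω k * X ω k' ∂μ = 0 := congrFun₂ horth k k'
    have hestimate : crossMoment μ E (estimate μ (.comap X inferInstance) Y) = 0 :=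
      crossMoment_eq_zero_of_condExp_eq_zero hXm.comap_le hE2 (memLp_estimate hY2)
        measurable_estimate fun j => hG.condExp_comap_eq_zero hXm (hE j) hX (congrFun₂ horth j)
    have hEY : crossMoment μ E Y = 0 := by
      have hsub := crossMoment_sub_right hE2 hY2 (memLp_estimate (m := .comap X inferInstance) hY2)
      rw [hestimate, sub_zero] at hsub
      exact hsub.symm.trans hinnov
    exact hG.condExp_comap_prodMk_eq_zero hXm hYm (hE k) hX hY hEX (congrFun₂ hEY k)

end IsGaussianSpace

end GaussianSpace

section LinearStrategy

variable {Ω ι κ : Type*} {l n : ι → Type*} [Fintype κ] [∀ i, Fintype (l i)]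

/-- The strategy `ẑᵢ = Lᵢ x̂ + Fᵢ ỹᵢ`, linear in the estimate of `x` given the common information
`m` and in the innovations of the private observations `yᵢ`. -/
noncomputable def linearStrategy [MeasurableSpace Ω] (μ : Measure Ω) (m : MeasurableSpace Ω)
    (x : Ω → κ → ℝ) (y : ∀ i, Ω → l i → ℝ) (L : ∀ i, Matrix (n i) κ ℝ)
    (F : ∀ i, Matrix (n i) (l i) ℝ) (i : ι) : Ω → n i → ℝ :=
  fun ω => L i *ᵥ estimate μ m x ω + F i *ᵥ innovation μ m (y i) ω

variable {q : Type*} {m m₀ : MeasurableSpace Ω} {μ : Measure Ω} {x : Ω → κ → ℝ}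
  {y : ∀ i, Ω → l i → ℝ} {y0 : Ω → q → ℝ} {L : ∀ i, Matrix (n i) κ ℝ}
  {F : ∀ i, Matrix (n i) (l i) ℝ}

lemma mulVec_sub_linearStrategy (i : ι) (ω : Ω) :
    L i *ᵥ x ω - linearStrategy μ m x y L F i ω
      = L i *ᵥ innovation μ m x ω - F i *ᵥ innovation μ m (y i) ω := by
  simp only [linearStrategy, innovation, mulVec_sub]
  abel

lemma IsGaussianSpace.linearStrategy_mem [IsProbabilityMeasure μ] [Finite q]
    {G : Submodule ℝ (Ω → ℝ)} (hG : IsGaussianSpace μ G) (hy0m : Measurable y0)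
    (hx : ∀ k, (x · k) ∈ G) (hy0 : ∀ k, (y0 · k) ∈ G) (hy : ∀ i k, (y i · k) ∈ G)
    (i : ι) (k : n i) :
    (linearStrategy μ (.comap y0 inferInstance) x y L F i · k) ∈ G :=
  G.add_mem (dotProduct_mem_submodule (L i k) fun k' => hG.condExp_comap_mem hy0m (hx k') hy0)
    (dotProduct_mem_submodule (F i k) (hG.innovation_mem hy0m hy0 (hy i)))

lemma measurable_linearStrategy (i : ι) :
    Measurable[.comap (fun ω => (y0 ω, y i ω)) inferInstance]
      (linearStrategy μ (.comap y0 inferInstance) x y L F i) :=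
  ((measurable_mulVec (L i)).comp measurable_estimate_comap_prodMk).add
    ((measurable_mulVec (F i)).comp measurable_innovation_comap_prodMk)

variable [∀ i, Fintype (n i)]

lemma memLp_linearStrategy (hx : MemLp x 2 μ) (hy : ∀ i, MemLp (y i) 2 μ) (i : ι) :
    MemLp (linearStrategy μ m x y L F i) 2 μ :=
  (memLp_mulVec (L i) (memLp_estimate hx)).add (memLp_mulVec (F i) (memLp_innovation (hy i)))

variable [Fintype ι] {S : ∀ i j, Matrix (n i) (n j) ℝ}

lemma crossMoment_weightedError_linearStrategy {p : Type*} [Fintype p] {W : Ω → p → ℝ}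
    (hx : MemLp x 2 μ) (hy : ∀ i, MemLp (y i) 2 μ) (hW : MemLp W 2 μ) (i : ι) :
    crossMoment μ (weightedError S ((fun i ω => L i *ᵥ x ω) - linearStrategy μ m x y L F) i) W
      = ∑ j, (S i j * L j * crossMoment μ (innovation μ m x) W
          - S i j * F j * crossMoment μ (innovation μ m (y j)) W) := by
  have hLx (j : ι) : MemLp (fun ω => L j *ᵥ innovation μ m x ω) 2 μ :=
    memLp_mulVec (L j) (memLp_innovation hx)
  have hFy (j : ι) : MemLp (fun ω => F j *ᵥ innovation μ m (y j) ω) 2 μ :=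
    memLp_mulVec (F j) (memLp_innovation (hy j))
  have herror (j : ι) : ((fun i ω => L i *ᵥ x ω) - linearStrategy μ m x y L F) j
      = fun ω => L j *ᵥ innovation μ m x ω - F j *ᵥ innovation μ m (y j) ω :=
    funext (mulVec_sub_linearStrategy j)
  rw [crossMoment_weightedError (fun j => herror j ▸ (hLx j).sub (hFy j)) hW]
  refine Finset.sum_congr rfl fun j _ => ?_
  rw [herror, crossMoment_sub_left (hLx j) (hFy j) hW,
    crossMoment_mulVec_left _ (memLp_innovation hx) hW,
    crossMoment_mulVec_left _ (memLp_innovation (hy j)) hW, Matrix.mul_sub, Matrix.mul_assoc,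
    Matrix.mul_assoc]

lemma crossMoment_weightedError_linearStrategy_eq_zero [IsFiniteMeasure μ] {p : Type*} [Fintype p]
    {W : Ω → p → ℝ} (hm : m ≤ m₀) (hx : MemLp x 2 μ) (hy : ∀ i, MemLp (y i) 2 μ)
    (hW : MemLp W 2 μ) (hWm : Measurable[m] W) (i : ι) :
    crossMoment μ (weightedError S ((fun i ω => L i *ᵥ x ω) - linearStrategy μ m x y L F) i) W
      = 0 := by
  rw [crossMoment_weightedError_linearStrategy hx hy hW]
  refine Finset.sum_eq_zero fun j _ => ?_
  rw [crossMoment_innovation_eq_zero hm hx hW hWm, crossMoment_innovation_eq_zero hm (hy j) hW hWm,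
    Matrix.mul_zero, Matrix.mul_zero, sub_zero]

lemma crossMoment_weightedError_linearStrategy_innovation [IsFiniteMeasure μ] (hm : m ≤ m₀)
    (hx : MemLp x 2 μ) (hy : ∀ i, MemLp (y i) 2 μ) (i : ι) :
    crossMoment μ (weightedError S ((fun i ω => L i *ᵥ x ω) - linearStrategy μ m x y L F) i)
        (innovation μ m (y i))
      = -∑ j, (S i j * F j * crossMoment μ (innovation μ m (y j)) (innovation μ m (y i))
        - S i j * L j * crossMoment μ x (innovation μ m (y i))) := by
  rw [crossMoment_weightedError_linearStrategy hx hy (memLp_innovation (hy i)),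
    crossMoment_innovation_innovation hm hx (hy i), ← Finset.sum_neg_distrib]
  simp only [neg_sub]

variable {G : Submodule ℝ (Ω → ℝ)}

lemma weightedError_mem_submodule {r : ∀ i, Ω → n i → ℝ} (hr : ∀ i k, (r i · k) ∈ G) (i : ι)
    (k : n i) : (weightedError S r i · k) ∈ G := by
  have hsum : (weightedError S r i · k) = ∑ j, fun ω => S i j k ⬝ᵥ r j ω := by
    ext ω
    simp only [weightedError, Finset.sum_apply, mulVec]
  rw [hsum]
  exact sum_mem fun j _ => dotProduct_mem_submodule _ (hr j)

variable [IsProbabilityMeasure μ] [Finite q]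

theorem IsGaussianSpace.isTeamOptimal_linearStrategy_iff (hG : IsGaussianSpace μ G)
    (hS : (ofBlocks S).PosSemidef) (hy0m : Measurable y0) (hym : ∀ i, Measurable (y i))
    (hx : ∀ k, (x · k) ∈ G) (hy0 : ∀ k, (y0 · k) ∈ G) (hy : ∀ i k, (y i · k) ∈ G) :
    IsTeamOptimal μ S (fun i => .comap (fun ω => (y0 ω, y i ω)) inferInstance)
        (fun i ω => L i *ᵥ x ω) (linearStrategy μ (.comap y0 inferInstance) x y L F) ↔
      ∀ i, ∑ j, (S i j * F j * crossMoment μ (innovation μ (.comap y0 inferInstance) (y j))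
            (innovation μ (.comap y0 inferInstance) (y i))
        - S i j * L j * crossMoment μ x (innovation μ (.comap y0 inferInstance) (y i))) = 0 := by
  have := Fintype.ofFinite q
  let e := weightedError S
    ((fun i ω => L i *ᵥ x ω) - linearStrategy μ (.comap y0 inferInstance) x y L F)
  have hx2 : MemLp x 2 μ := .of_eval fun k => hG.memLp (hx k)
  have hy02 : MemLp y0 2 μ := .of_eval fun k => hG.memLp (hy0 k)
  have hy2 (i : ι) : MemLp (y i) 2 μ := .of_eval fun k => hG.memLp (hy i k)
  have heG (i : ι) (k : n i) : (e i · k) ∈ G :=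
    weightedError_mem_submodule (fun j k' => G.sub_mem (dotProduct_mem_submodule (L j k') hx)
      (hG.linearStrategy_mem hy0m hx hy0 hy j k')) i k
  have hey0 (i : ι) : crossMoment μ (e i) y0 = 0 :=
    crossMoment_weightedError_linearStrategy_eq_zero hy0m.comap_le hx2 hy2 hy02
      (comap_measurable y0) i
  calc IsTeamOptimal μ S _ _ (linearStrategy μ (.comap y0 inferInstance) x y L F)
      ↔ ∀ i k, μ[(e i · k) | .comap (fun ω => (y0 ω, y i ω)) inferInstance] =ᵐ[μ] 0 :=
        isTeamOptimal_iff_condExp_weightedError_eq_zero hS (fun i => (hy0m.prodMk (hym i)).comap_le)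
          (fun i => memLp_mulVec (L i) hx2) (memLp_linearStrategy hx2 hy2)
          measurable_linearStrategy
    _ ↔ ∀ i, crossMoment μ (e i) (innovation μ (.comap y0 inferInstance) (y i)) = 0 :=
        forall_congr' fun i =>
          hG.condExp_comap_prodMk_eq_zero_iff_crossMoment_innovation hy0m (hym i) (heG i) hy0
            (hy i) (hey0 i)
    _ ↔ _ := forall_congr' fun i => by
        rw [crossMoment_weightedError_linearStrategy_innovation hy0m.comap_le hx2 hy2 i,
          neg_eq_zero]

end LinearStrategy

lemma mul_nonsing_inv_eq_zero_iff {m n R : Type*} [Fintype n] [DecidableEq n] [CommRing R]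
    {A : Matrix m n R} {M : Matrix n n R} (hM : IsUnit M.det) : A * M⁻¹ = 0 ↔ A = 0 := by
  refine ⟨fun h => ?_, fun h => by rw [h, Matrix.zero_mul]⟩
  rw [← nonsing_inv_mul_cancel_right M A hM, h, Matrix.zero_mul]

theorem stmt12_general {Ω ι κ q : Type*} {l n : ι → Type*} [Fintype ι] [Fintype κ] [Fintype q]
    [∀ i, Fintype (l i)] [∀ i, Fintype (n i)] [MeasurableSpace Ω] (μ : Measure Ω)
    [IsProbabilityMeasure μ] (x : Ω → κ → ℝ) (y0 : Ω → q → ℝ) (y : ∀ i, Ω → l i → ℝ)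
    (hy0 : Measurable y0) (hy : ∀ i, Measurable (y i))
    (hGauss : ∀ (a : κ → ℝ) (b0 : q → ℝ) (b : ∀ i, l i → ℝ), ∃ v : NNReal,
      μ.map (fun ω => (∑ k, a k * x ω k) + (∑ k, b0 k * y0 ω k) + ∑ i, ∑ k, b i k * y i ω k)
        = gaussianReal 0 v)
    (xhat0 : Ω → κ → ℝ)
    (hxhat0 : xhat0 = fun ω k =>
      (μ[(fun ω => x ω k) | MeasurableSpace.comap y0 inferInstance]) ω)
    (yhat : ∀ i, Ω → l i → ℝ)
    (hyhat : ∀ i, yhat i = fun ω k =>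
      (μ[(fun ω => y i ω k) | MeasurableSpace.comap y0 inferInstance]) ω)
    (Θhat : ∀ i, Matrix κ (l i) ℝ)
    (hΘhat : ∀ i k k', Θhat i k k' = ∫ ω, x ω k * (y i ω k' - yhat i ω k') ∂μ)
    (Sigmahat : ∀ i j, Matrix (l i) (l j) ℝ)
    (hSigmahat : ∀ i j k k', Sigmahat i j k k'
      = ∫ ω, (y i ω k - yhat i ω k) * (y j ω k' - yhat j ω k') ∂μ)
    (L : ∀ i, Matrix (n i) κ ℝ) (S : ∀ i j, Matrix (n i) (n j) ℝ)
    (Sbig : Matrix (Σ i, n i) (Σ i, n i) ℝ)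
    (hSbig : ∀ i j r r', Sbig ⟨i, r⟩ ⟨j, r'⟩ = S i j r r') (hSpsd : Sbig.PosSemidef)
    (J : (∀ i, Ω → n i → ℝ) → ℝ)
    (hJ : ∀ z, J z = ∫ ω, ∑ i, ∑ j,
      (L i *ᵥ x ω - z i ω) ⬝ᵥ S i j *ᵥ (L j *ᵥ x ω - z j ω) ∂μ)
    (F : ∀ i, Matrix (n i) (l i) ℝ) :
    (∀ g : ∀ i, (q → ℝ) × (l i → ℝ) → n i → ℝ, (∀ i, Measurable (g i)) →
        (∀ i k, MemLp (fun ω => g i (y0 ω, y i ω) k) 2 μ) →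
        J (fun i ω => L i *ᵥ xhat0 ω + F i *ᵥ fun k => y i ω k - yhat i ω k)
          ≤ J (fun i ω => g i (y0 ω, y i ω))) ↔
      ∀ i, ∑ j, (S i j * F j * Sigmahat j i - S i j * L j * Θhat i) = 0 := by
  obtain ⟨G, hG, hxG, hy0G, hyG⟩ := exists_isGaussianSpace hGauss
  obtain rfl : xhat0 = estimate μ (.comap y0 inferInstance) x := hxhat0
  obtain rfl : yhat = fun i => estimate μ (.comap y0 inferInstance) (y i) := funext hyhat
  obtain rfl : Θhat = fun i => crossMoment μ x (innovation μ (.comap y0 inferInstance) (y i)) :=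
    funext fun i => Matrix.ext (hΘhat i)
  obtain rfl : Sigmahat = fun i j => crossMoment μ (innovation μ (.comap y0 inferInstance) (y i))
      (innovation μ (.comap y0 inferInstance) (y j)) :=
    funext₂ fun i j => Matrix.ext (hSigmahat i j)
  obtain rfl : Sbig = ofBlocks S := Matrix.ext fun a b => hSbig a.1 b.1 a.2 b.2
  obtain rfl : J = fun z => teamCost μ S ((fun i ω => L i *ᵥ x ω) - z) := funext hJ
  refine Iff.trans ?_ (hG.isTeamOptimal_linearStrategy_iff hSpsd hy0 hy hxG hy0G hyG)
  rw [isTeamOptimal_comap_iff]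
  simp only [memLp_pi_iff]
  rfl

/-- Multi-agent Gaussian estimation: a linear strategy `ẑᵢ = Lᵢ x̂₀ + Fᵢ ỹᵢ` minimizes
the expected team estimation error over all measurable square-integrable strategies if
and only if `Σⱼ (Sᵢⱼ Fⱼ Σ̂ⱼᵢ − Sᵢⱼ Lⱼ Θ̂ᵢ) Σ̂ᵢᵢ⁻¹ = 0` for all `i`, equivalently
`Σⱼ (Sᵢⱼ Fⱼ Σ̂ⱼᵢ − Sᵢⱼ Lⱼ Θ̂ᵢ) = 0` for all `i`. -/
theorem stmt12 {Ω : Type*} [MeasurableSpace Ω] (μ : Measure Ω) [IsProbabilityMeasure μ]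
    (dx q n : ℕ) (dy dz : Fin n → ℕ)
    (x : Ω → Fin dx → ℝ) (y0 : Ω → Fin q → ℝ) (y : ∀ i : Fin n, Ω → Fin (dy i) → ℝ)
    (hx : Measurable x) (hy0 : Measurable y0) (hy : ∀ i, Measurable (y i))
    (hGauss : ∀ (a : Fin dx → ℝ) (b0 : Fin q → ℝ) (b : ∀ i, Fin (dy i) → ℝ),
      ∃ v : NNReal,
        μ.map (fun ω => (∑ k, a k * x ω k) + (∑ k, b0 k * y0 ω k)
          + ∑ i, ∑ k, b i k * y i ω k) = gaussianReal 0 v)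
    (Sigma00 : Matrix (Fin q) (Fin q) ℝ)
    (hSigma00 : ∀ k l, Sigma00 k l = ∫ ω, y0 ω k * y0 ω l ∂μ)
    (hinv0 : IsUnit Sigma00.det)
    (xhat0 : Ω → Fin dx → ℝ)
    (hxhat0 : xhat0 = fun ω k =>
      (μ[(fun ω => x ω k) | MeasurableSpace.comap y0 inferInstance]) ω)
    (yhat : ∀ i : Fin n, Ω → Fin (dy i) → ℝ)
    (hyhat : ∀ i, yhat i = fun ω k =>
      (μ[(fun ω => y i ω k) | MeasurableSpace.comap y0 inferInstance]) ω)
    (Θhat : ∀ i, Matrix (Fin dx) (Fin (dy i)) ℝ)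
    (hΘhat : ∀ i k l, Θhat i k l = ∫ ω, x ω k * (y i ω l - yhat i ω l) ∂μ)
    (Sigmahat : ∀ i j, Matrix (Fin (dy i)) (Fin (dy j)) ℝ)
    (hSigmahat : ∀ i j k l, Sigmahat i j k l
      = ∫ ω, (y i ω k - yhat i ω k) * (y j ω l - yhat j ω l) ∂μ)
    (hinv : ∀ i, IsUnit (Sigmahat i i).det)
    (L : ∀ i : Fin n, Matrix (Fin (dz i)) (Fin dx) ℝ)
    (S : ∀ i j : Fin n, Matrix (Fin (dz i)) (Fin (dz j)) ℝ)
    (Sbig : Matrix (Σ i : Fin n, Fin (dz i)) (Σ i : Fin n, Fin (dz i)) ℝ)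
    (hSbig : ∀ (i j : Fin n) (r : Fin (dz i)) (r' : Fin (dz j)),
      Sbig ⟨i, r⟩ ⟨j, r'⟩ = S i j r r')
    (hSpd : Sbig.PosDef)
    (J : (∀ i : Fin n, Ω → Fin (dz i) → ℝ) → ℝ)
    (hJ : ∀ z, J z = ∫ ω, ∑ i, ∑ j,
      ((L i).mulVec (x ω) - z i ω) ⬝ᵥ (S i j).mulVec ((L j).mulVec (x ω) - z j ω) ∂μ)
    (F : ∀ i : Fin n, Matrix (Fin (dz i)) (Fin (dy i)) ℝ) :
    ((∀ g : ∀ i : Fin n, (Fin q → ℝ) × (Fin (dy i) → ℝ) → Fin (dz i) → ℝ,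
        (∀ i, Measurable (g i)) →
        (∀ i k, MemLp (fun ω => g i (y0 ω, y i ω) k) 2 μ) →
        J (fun i ω => (L i).mulVec (xhat0 ω)
              + (F i).mulVec (fun l => y i ω l - yhat i ω l))
          ≤ J (fun i ω => g i (y0 ω, y i ω)))
      ↔ (∀ i, (∑ j, (S i j * F j * Sigmahat j i - S i j * L j * Θhat i))
                * (Sigmahat i i)⁻¹ = 0)) ∧
    ((∀ g : ∀ i : Fin n, (Fin q → ℝ) × (Fin (dy i) → ℝ) → Fin (dz i) → ℝ,
        (∀ i, Measurable (g i)) →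
        (∀ i k, MemLp (fun ω => g i (y0 ω, y i ω) k) 2 μ) →
        J (fun i ω => (L i).mulVec (xhat0 ω)
              + (F i).mulVec (fun l => y i ω l - yhat i ω l))
          ≤ J (fun i ω => g i (y0 ω, y i ω)))
      ↔ (∀ i, ∑ j, (S i j * F j * Sigmahat j i - S i j * L j * Θhat i) = 0)) := by
  have h := stmt12_general μ x y0 y hy0 hy hGauss xhat0 hxhat0 yhat hyhat Θhat hΘhat Sigmahat
    hSigmahat L S Sbig hSbig hSpd.posSemidef J hJ F
  exact ⟨h.trans (forall_congr' fun i => (mul_nonsing_inv_eq_zero_iff (hinv i)).symm), h⟩
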